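/- For every integer n > 2^50, every positive integer N, and every n-linear form U : (ℂ^N)^n → ℂ, one has (∑_{i₁,…,iₙ=1}^N |U(e_{i₁},…,e_{iₙ})|^{2n/(n+1)})^{(n+1)/(2n)} ≤ 0.99135458644 · (n-1)^{0.304975} · ‖U‖. -/

import Mathlib

open Real

/-- The Bohnenblust--Hille quantity of an `n`-linear form on `ℓ_∞^N` over `ℂ`:
`(∑_{i₁,…,iₙ} |U(e_{i₁},…,e_{iₙ})|^{2n/(n+1)})^{(n+1)/(2n)}`. -/
noncomputable def BHcomplex (n N : ℕ)
    (U : ContinuousMultilinearMap ℂ (fun _ : Fin n => (Fin N → ℂ)) ℂ) : ℝ :=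
  (∑ i : Fin n → Fin N,
      ‖U (fun k => Pi.single (i k) (1 : ℂ))‖ ^ ((2 * n : ℝ) / (n + 1)))
    ^ ((n + 1 : ℝ) / (2 * n))

/-!
Blei's inequality bounds the `ℓ^(2n/(n+1))` norm of the coefficients of an `n`-linear form by the
geometric mean over `l` of mixed sums, in which the `l`-th index carries the `ℓ²` norm and the
others the norm of exponent `s = 2(n-1)/n`. Khinchine's inequality for Steinhaus sums turns the
`ℓ²` norm into an average over phases of the `l`-th variable, hence the mixed sum into an average of
Bohnenblust–Hille sums of `(n-1)`-linear forms.

For `X` the square of the modulus of a normalized Steinhaus sum, the convex function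
`r ↦ log 𝔼 X ^ r` vanishes at `1` and has slope `𝔼 X log X` there, so this entropy governs the
Khinchine constant. A cubic majorant of `log` bounds it by `0.55` using only the first four moments
of `X`, and the passage from `n - 1` to `n` costs a factor `exp (0.275 / (n - 1))`. The product of
these factors is `exp (0.275 * H_{n-1})`, and `H_m ≤ log m + 2/3` for `m ≥ 6`.
-/

open Finset
open scoped BigOperators ComplexConjugate

section LogMajorant

/-- The cubic used to bound an entropy by the first four moments. Its derivative agrees with that
of `log` exactly at `1`, `5 / 2` and `9 / 2`, and the constant term makes it lie above `log` at the
local minima `1` and `9 / 2` of the difference. -/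
noncomputable def logMajorant (y : ℝ) : ℝ :=
  -1.285 + 73 / 45 * y - 16 / 45 * y ^ 2 + 4 / 135 * y ^ 3

theorem hasDerivAt_logMajorant_sub_log {x : ℝ} (hx : x ≠ 0) :
    HasDerivAt (fun y => logMajorant y - log y)
      (4 / 45 * (x - 1) * (x - 5 / 2) * (x - 9 / 2) / x) x := by
  have hpoly := ((((hasDerivAt_id x).const_mul (73 / 45)).const_add (-1.285)).sub
    (((hasDerivAt_id x).pow 2).const_mul (16 / 45))).add
    (((hasDerivAt_id x).pow 3).const_mul (4 / 135))
  refine (hpoly.sub (hasDerivAt_log hx)).congr_deriv ?_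
  simp only [id]
  field_simp
  ring

theorem log_nine_halves_le : log (9 / 2) ≤ 1.515 := by
  have hsplit : log (9 / 2) = 2 * log 2 + log (9 / 8) := by
    rw [show (9 / 2 : ℝ) = 2 ^ 2 * (9 / 8) by norm_num, log_mul (by norm_num) (by norm_num),
      log_pow, Nat.cast_ofNat]
  linarith [log_two_lt_d9, log_le_sub_one_of_pos (show (0 : ℝ) < 9 / 8 by norm_num)]

theorem log_le_logMajorant {y : ℝ} (hy : 0 < y) : log y ≤ logMajorant y := by
  have hderiv {x : ℝ} (hx : 0 < x) := hasDerivAt_logMajorant_sub_log hx.ne'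
  have hdiff {s : Set ℝ} (hs : ∀ x ∈ s, 0 < x) :
      DifferentiableOn ℝ (fun y => logMajorant y - log y) s :=
    fun x hx => (hderiv (hs x hx)).differentiableAt.differentiableWithinAt
  suffices 0 ≤ logMajorant y - log y by linarith
  rcases le_total y (5 / 2) with hle | hge
  · have hmin : IsMinOn (fun y => logMajorant y - log y) (Set.Ioc 0 (5 / 2)) 1 := by
      refine isMinOn_Ioc_of_deriv (hderiv one_pos).continuousAt (hderiv (by norm_num)).continuousAt
        (hdiff fun x hx => hx.1) (hdiff fun x hx => one_pos.trans hx.1) ?_ ?_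
      · rintro x ⟨hx0, hx1⟩
        rw [(hderiv hx0).deriv]
        exact div_nonpos_of_nonpos_of_nonneg (mul_nonpos_of_nonneg_of_nonpos
          (mul_nonneg_of_nonpos_of_nonpos (by linarith) (by linarith)) (by linarith)) hx0.le
      · rintro x ⟨hx1, hx2⟩
        rw [(hderiv (one_pos.trans hx1)).deriv]
        exact div_nonneg (mul_nonneg_of_nonpos_of_nonpos
          (mul_nonpos_of_nonneg_of_nonpos (by linarith) (by linarith)) (by linarith)) (by linarith)
    exact le_trans (by norm_num [logMajorant]) (hmin ⟨hy, hle⟩)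
  · have hmin : IsMinOn (fun y => logMajorant y - log y) (Set.Ici (5 / 2)) (9 / 2) := by
      refine isMinOn_Ici_of_deriv (hderiv (by norm_num)).continuousAt
        (hderiv (by norm_num)).continuousAt
        (hdiff fun x hx => lt_trans (by norm_num) hx.1)
        (hdiff fun x hx => lt_trans (by norm_num) hx) ?_ ?_
      · rintro x ⟨hx1, hx2⟩
        rw [(hderiv (by linarith)).deriv]
        exact div_nonpos_of_nonpos_of_nonneg (mul_nonpos_of_nonneg_of_nonpos
          (mul_nonneg (by linarith) (by linarith)) (by linarith)) (by linarith)
      · rintro x (hx : 9 / 2 < x)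
        rw [(hderiv (by linarith)).deriv]
        exact div_nonneg (mul_nonneg
          (mul_nonneg (by linarith) (by linarith)) (by linarith)) (by linarith)
    refine le_trans ?_ (hmin hge)
    norm_num [logMajorant]
    linarith [log_nine_halves_le]

end LogMajorant

section Jensen

theorem mul_one_sub_mul_log_sub_le_exp_mul_rpow {x : ℝ} (hx : 0 ≤ x) (c r : ℝ) :
    x * (1 - (1 - r) * (log x - c)) ≤ exp (c * (1 - r)) * x ^ r := by
  rcases hx.eq_or_lt with rfl | hpos
  · rw [zero_mul]
    positivity
  · calc x * (1 - (1 - r) * (log x - c)) = x * (-((1 - r) * (log x - c)) + 1) := by ring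
      _ ≤ x * exp (-((1 - r) * (log x - c))) := by
        gcongr
        exact add_one_le_exp _
      _ = exp (log x) * exp (-((1 - r) * (log x - c))) := by rw [exp_log hpos]
      _ = exp (c * (1 - r)) * x ^ r := by
        rw [rpow_def_of_pos hpos, ← exp_add, ← exp_add]
        ring_nf

theorem one_le_exp_mul_expect_rpow {Ω : Type*} [Fintype Ω] {X : Ω → ℝ} {c r : ℝ}
    (hX : ∀ ω, 0 ≤ X ω) (hr : r ≤ 1) (hmean : 𝔼 ω, X ω = 1)
    (hentropy : 𝔼 ω, X ω * log (X ω) ≤ c) : 1 ≤ exp (c * (1 - r)) * 𝔼 ω, X ω ^ r := by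
  have hlinear : 𝔼 ω, X ω * (1 - (1 - r) * (log (X ω) - c)) =
      1 + (1 - r) * (c - 𝔼 ω, X ω * log (X ω)) := by
    calc 𝔼 ω, X ω * (1 - (1 - r) * (log (X ω) - c))
      _ = 𝔼 ω, ((1 + (1 - r) * c) * X ω - (1 - r) * (X ω * log (X ω))) :=
        expect_congr rfl fun ω _ => by ring
      _ = 1 + (1 - r) * (c - 𝔼 ω, X ω * log (X ω)) := by
        rw [expect_sub_distrib, ← mul_expect, ← mul_expect, hmean]
        ring
  calc 1 ≤ 1 + (1 - r) * (c - 𝔼 ω, X ω * log (X ω)) :=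
        le_add_of_nonneg_right (mul_nonneg (sub_nonneg.2 hr) (sub_nonneg.2 hentropy))
    _ = 𝔼 ω, X ω * (1 - (1 - r) * (log (X ω) - c)) := hlinear.symm
    _ ≤ 𝔼 ω, exp (c * (1 - r)) * X ω ^ r :=
      expect_le_expect fun ω _ => mul_one_sub_mul_log_sub_le_exp_mul_rpow (hX ω) c r
    _ = exp (c * (1 - r)) * 𝔼 ω, X ω ^ r := (mul_expect ..).symm

end Jensen

section Moments

variable {ι : Type*} {q : ℕ} [NeZero q]

theorem expect_stdAddChar_pow_mul_conj {d j k : ℕ} (hd : d < q) (hj : j ≤ d) (hk : k ≤ d) :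
    𝔼 x : ZMod q, ZMod.stdAddChar x ^ j * conj (ZMod.stdAddChar x ^ k) =
      if j = k then (1 : ℂ) else 0 := by
  have hcast : (j : ZMod q) - (k : ZMod q) = 0 ↔ j = k := by
    rw [sub_eq_zero, ZMod.natCast_eq_natCast_iff, Nat.ModEq, Nat.mod_eq_of_lt (by lia),
      Nat.mod_eq_of_lt (by lia)]
  have hterm (x : ZMod q) : ZMod.stdAddChar x ^ j * conj (ZMod.stdAddChar x ^ k) =
      ZMod.stdAddChar (x * ((j : ZMod q) - (k : ZMod q))) := by
    rw [mul_sub, AddChar.map_sub_eq_div, div_eq_mul_inv, mul_comm x, mul_comm x, ← nsmul_eq_mul,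
      ← nsmul_eq_mul, AddChar.map_nsmul_eq_pow, AddChar.map_nsmul_eq_pow, map_pow, ← inv_pow,
      AddChar.inv_apply_eq_conj]
  simp_rw [hterm, Fintype.expect_eq_sum_div_card,
    AddChar.sum_mulShift _ (ZMod.isPrimitive_stdAddChar q), hcast]
  split_ifs <;> simp

theorem expect_norm_sum_stdAddChar_pow_sq {d : ℕ} (hd : d < q) (c : ℕ → ℂ) :
    𝔼 x : ZMod q, ‖∑ j ∈ range (d + 1), c j * ZMod.stdAddChar x ^ j‖ ^ 2 =
      ∑ j ∈ range (d + 1), ‖c j‖ ^ 2 := by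
  apply Complex.ofReal_injective
  have hexpand (x : ZMod q) :
      ((‖∑ j ∈ range (d + 1), c j * ZMod.stdAddChar x ^ j‖ ^ 2 : ℝ) : ℂ) =
        ∑ j ∈ range (d + 1), ∑ k ∈ range (d + 1), c j * conj (c k) *
          (ZMod.stdAddChar x ^ j * conj (ZMod.stdAddChar x ^ k)) := by
    rw [Complex.ofReal_pow, ← Complex.mul_conj', map_sum, sum_mul_sum]
    simp only [map_mul, mul_mul_mul_comm]
  rw [Complex.ofReal_expect, Complex.ofReal_sum]
  simp_rw [hexpand, expect_sum_comm, ← mul_expect]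
  refine sum_congr rfl fun j hj => ?_
  have hortho (k) (hk : k ∈ range (d + 1)) := expect_stdAddChar_pow_mul_conj hd
    (mem_range_succ_iff.1 hj) (mem_range_succ_iff.1 hk)
  rw [sum_congr rfl fun k hk => congrArg (c j * conj (c k) * ·) (hortho k hk)]
  simp only [mul_ite, mul_one, mul_zero, sum_ite_eq, if_pos hj, Complex.mul_conj',
    Complex.ofReal_pow]

theorem expect_norm_add_mul_stdAddChar_sq_pow {d : ℕ} (hd : d < q) (w b : ℂ) :
    𝔼 x : ZMod q, (‖w + b * ZMod.stdAddChar x‖ ^ 2) ^ d =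
      ∑ j ∈ range (d + 1), (d.choose j : ℝ) ^ 2 * ((‖b‖ ^ 2) ^ j * (‖w‖ ^ 2) ^ (d - j)) := by
  have hbinom (x : ZMod q) : (‖w + b * ZMod.stdAddChar x‖ ^ 2) ^ d =
      ‖∑ j ∈ range (d + 1), (d.choose j * b ^ j * w ^ (d - j)) * ZMod.stdAddChar x ^ j‖ ^ 2 := by
    rw [pow_right_comm, ← norm_pow, add_comm w, add_pow]
    congr 2
    exact sum_congr rfl fun j _ => by ring
  simp_rw [hbinom, expect_norm_sum_stdAddChar_pow_sq hd]
  refine sum_congr rfl fun j _ => ?_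
  simp only [norm_mul, norm_pow, Complex.norm_natCast]
  ring

/-- The Steinhaus sum `∑ i ∈ s, a i * ωᵢ`, with the phases `ωᵢ` taken among the `q`-th roots of
unity rather than on the whole circle and indexed by `z : ι → ZMod q`. For `q > d` its moments of
order `2 * d` are those of the continuous Steinhaus sum, and expectations stay finite averages. -/
noncomputable def steinhausSum (s : Finset ι) (a : ι → ℂ) (z : ι → ZMod q) : ℂ :=
  ∑ i ∈ s, a i * ZMod.stdAddChar (z i)

/-- The power sum of degree `d` in the numbers `‖a i‖ ^ 2`, in terms of which the moments of
`steinhausSum` are expressed. -/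
noncomputable def sqPowerSum (s : Finset ι) (a : ι → ℂ) (d : ℕ) : ℝ := ∑ i ∈ s, (‖a i‖ ^ 2) ^ d

theorem sqPowerSum_sq_le (s : Finset ι) (a : ι → ℂ) {d j k : ℕ} (h : j + k = 2 * d) :
    sqPowerSum s a d ^ 2 ≤ sqPowerSum s a j * sqPowerSum s a k := by
  have hcs := sum_mul_sq_le_sq_mul_sq s (fun i => ‖a i‖ ^ j) (fun i => ‖a i‖ ^ k)
  simp only [← pow_add, h] at hcs
  simpa only [sqPowerSum, ← pow_mul, mul_comm] using hcs

theorem sqPowerSum_const_mul (s : Finset ι) (a : ι → ℂ) (c : ℂ) (d : ℕ) :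
    sqPowerSum s (fun i => c * a i) d = (‖c‖ ^ 2) ^ d * sqPowerSum s a d := by
  simp only [sqPowerSum, norm_mul, mul_pow, mul_sum]

theorem steinhausSum_const_mul (s : Finset ι) (a : ι → ℂ) (c : ℂ) (z : ι → ZMod q) :
    steinhausSum s (fun i => c * a i) z = c * steinhausSum s a z := by
  simp only [steinhausSum, mul_assoc, mul_sum]

variable [DecidableEq ι]

theorem steinhausSum_insert_add_single {s : Finset ι} {i : ι} (hi : i ∉ s) (a : ι → ℂ)
    (z : ι → ZMod q) (x : ZMod q) :
    steinhausSum (insert i s) a (z + Pi.single i x) =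
      steinhausSum s a z + a i * ZMod.stdAddChar (z i) * ZMod.stdAddChar x := by
  have hs : ∀ j ∈ s, (z + Pi.single i x : ι → ZMod q) j = z j := fun j hj => by
    rw [Pi.add_apply, Pi.single_eq_of_ne (ne_of_mem_of_not_mem hj hi), add_zero]
  rw [steinhausSum, sum_insert hi, sum_congr rfl fun j hj => by rw [hs j hj], Pi.add_apply,
    Pi.single_eq_same, AddChar.map_add_eq_mul, steinhausSum, add_comm, mul_assoc]

theorem expect_norm_steinhausSum_insert_sq_pow [Fintype ι] {d : ℕ} (hd : d < q) {s : Finset ι}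
    {i : ι} (hi : i ∉ s) (a : ι → ℂ) :
    𝔼 z : ι → ZMod q, (‖steinhausSum (insert i s) a z‖ ^ 2) ^ d =
      ∑ j ∈ range (d + 1), (d.choose j : ℝ) ^ 2 *
        ((‖a i‖ ^ 2) ^ j * 𝔼 z : ι → ZMod q, (‖steinhausSum s a z‖ ^ 2) ^ (d - j)) := by
  have htranslate (x : ZMod q) : 𝔼 z : ι → ZMod q, (‖steinhausSum (insert i s) a z‖ ^ 2) ^ d =
      𝔼 z : ι → ZMod q, (‖steinhausSum (insert i s) a (z + Pi.single i x)‖ ^ 2) ^ d :=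
    (Fintype.expect_equiv (Equiv.addRight (Pi.single i x : ι → ZMod q)) _ _ fun _ => rfl).symm
  have hresample (z : ι → ZMod q) :
      𝔼 x : ZMod q, (‖steinhausSum (insert i s) a (z + Pi.single i x)‖ ^ 2) ^ d =
        ∑ j ∈ range (d + 1), (d.choose j : ℝ) ^ 2 *
          ((‖a i‖ ^ 2) ^ j * (‖steinhausSum s a z‖ ^ 2) ^ (d - j)) := by
    simp_rw [steinhausSum_insert_add_single hi, expect_norm_add_mul_stdAddChar_sq_pow hd,
      norm_mul, AddChar.norm_apply, mul_one]
  calc 𝔼 z : ι → ZMod q, (‖steinhausSum (insert i s) a z‖ ^ 2) ^ d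
    _ = 𝔼 x : ZMod q, 𝔼 z : ι → ZMod q,
          (‖steinhausSum (insert i s) a (z + Pi.single i x)‖ ^ 2) ^ d := by
      rw [← expect_congr rfl fun x _ => htranslate x, Fintype.expect_const]
    _ = 𝔼 z : ι → ZMod q, ∑ j ∈ range (d + 1), (d.choose j : ℝ) ^ 2 *
          ((‖a i‖ ^ 2) ^ j * (‖steinhausSum s a z‖ ^ 2) ^ (d - j)) := by
      rw [expect_comm, expect_congr rfl fun z _ => hresample z]
    _ = _ := by simp_rw [expect_sum_comm, ← mul_expect]

variable [Fintype ι] (s : Finset ι) (a : ι → ℂ)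

theorem expect_norm_steinhausSum_sq (hq : 1 < q) :
    𝔼 z : ι → ZMod q, ‖steinhausSum s a z‖ ^ 2 = sqPowerSum s a 1 := by
  induction s using Finset.induction_on with
  | empty => simp [steinhausSum, sqPowerSum]
  | insert i s hi ih =>
    have hrec := expect_norm_steinhausSum_insert_sq_pow hq hi a
    simp only [sum_range_succ, pow_one] at hrec
    simp only [hrec, ih, range_zero, sum_empty, Nat.choose_succ_self_right, Nat.choose_self,
      zero_add, Nat.cast_one, one_pow, pow_zero, tsub_zero, tsub_self, pow_one, one_mul, mul_one,
      univ_nonempty, expect_const, sqPowerSum, sum_insert hi]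
    ring

theorem expect_norm_steinhausSum_sq_pow_two (hq : 2 < q) :
    𝔼 z : ι → ZMod q, (‖steinhausSum s a z‖ ^ 2) ^ 2 =
      2 * sqPowerSum s a 1 ^ 2 - sqPowerSum s a 2 := by
  induction s using Finset.induction_on with
  | empty => simp [steinhausSum, sqPowerSum]
  | insert i s hi ih =>
    rw [expect_norm_steinhausSum_insert_sq_pow hq hi a]
    simp only [Nat.reduceAdd, sum_range_succ, range_one, sum_singleton, Nat.choose_zero_right,
      Nat.choose_succ_self_right, Nat.choose_self, Nat.cast_one, Nat.cast_ofNat,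
      Nat.add_one_sub_one, tsub_zero, tsub_self, one_pow, pow_zero, pow_one, one_mul, mul_one,
      univ_nonempty, expect_const, ih, expect_norm_steinhausSum_sq s a (show 1 < q by lia),
      sqPowerSum, sum_insert hi]
    ring

theorem expect_norm_steinhausSum_sq_pow_three (hq : 3 < q) :
    𝔼 z : ι → ZMod q, (‖steinhausSum s a z‖ ^ 2) ^ 3 =
      6 * sqPowerSum s a 1 ^ 3 - 9 * sqPowerSum s a 1 * sqPowerSum s a 2 +
        4 * sqPowerSum s a 3 := by
  induction s using Finset.induction_on with
  | empty => simp [steinhausSum, sqPowerSum]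
  | insert i s hi ih =>
    rw [expect_norm_steinhausSum_insert_sq_pow hq hi a]
    simp only [Nat.reduceAdd, sum_range_succ, range_one, sum_singleton, Nat.choose, Nat.cast_one,
      Nat.cast_ofNat, Nat.add_one_sub_one, Nat.reduceSub, tsub_zero, tsub_self, one_pow, pow_zero,
      pow_one, one_mul, mul_one, add_zero, univ_nonempty, expect_const, ih,
      expect_norm_steinhausSum_sq s a (show 1 < q by lia),
      expect_norm_steinhausSum_sq_pow_two s a (show 2 < q by lia), sqPowerSum, sum_insert hi]
    ring

theorem expect_norm_steinhausSum_sq_pow_four (hq : 4 < q) :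
    𝔼 z : ι → ZMod q, (‖steinhausSum s a z‖ ^ 2) ^ 4 =
      24 * sqPowerSum s a 1 ^ 4 - 72 * sqPowerSum s a 1 ^ 2 * sqPowerSum s a 2 +
        18 * sqPowerSum s a 2 ^ 2 + 64 * sqPowerSum s a 1 * sqPowerSum s a 3 -
        33 * sqPowerSum s a 4 := by
  induction s using Finset.induction_on with
  | empty => simp [steinhausSum, sqPowerSum]
  | insert i s hi ih =>
    rw [expect_norm_steinhausSum_insert_sq_pow hq hi a]
    simp only [Nat.reduceAdd, sum_range_succ, range_one, sum_singleton, Nat.choose, Nat.cast_one,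
      Nat.cast_ofNat, Nat.add_one_sub_one, Nat.reduceSub, tsub_zero, tsub_self, one_pow, pow_zero,
      pow_one, one_mul, mul_one, add_zero, univ_nonempty, expect_const, ih,
      expect_norm_steinhausSum_sq s a (show 1 < q by lia),
      expect_norm_steinhausSum_sq_pow_two s a (show 2 < q by lia),
      expect_norm_steinhausSum_sq_pow_three s a (show 3 < q by lia), sqPowerSum, sum_insert hi]
    ring

theorem expect_norm_steinhausSum_sq_mul_log_le (hq : 4 < q) (ha : sqPowerSum s a 1 = 1) :
    𝔼 z : ι → ZMod q, ‖steinhausSum s a z‖ ^ 2 * log (‖steinhausSum s a z‖ ^ 2) ≤ 0.55 := by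
  have hpointwise {x : ℝ} (hx : 0 ≤ x) :
      x * log x ≤ -1.285 * x + 73 / 45 * x ^ 2 - 16 / 45 * x ^ 3 + 4 / 135 * x ^ 4 := by
    rcases hx.eq_or_lt with rfl | hpos
    · norm_num
    · have hmul := mul_le_mul_of_nonneg_left (log_le_logMajorant hpos) hx
      rw [logMajorant] at hmul
      linarith
  have hsq : sqPowerSum s a 2 ^ 2 ≤ sqPowerSum s a 3 := by
    simpa only [ha, one_mul] using sqPowerSum_sq_le s a (show 1 + 3 = 2 * 2 from rfl)
  -- In the final estimate `hsq` and this inequality eliminate the square and the power sum of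
  -- degree `4`; the value `0.6` then gives both remaining power sums nonpositive coefficients.
  have hquad : 0 ≤ sqPowerSum s a 4 - 2 * 0.6 * sqPowerSum s a 3 +
      0.6 ^ 2 * sqPowerSum s a 2 := by
    simp only [sqPowerSum, mul_sum, ← sum_sub_distrib, ← sum_add_distrib]
    refine sum_nonneg fun i _ => ?_
    linarith [sq_nonneg ((‖a i‖ ^ 2) ^ 2 - 0.6 * ‖a i‖ ^ 2)]
  have hcube : 0 ≤ sqPowerSum s a 3 := sum_nonneg fun i _ => by positivity
  have htwo : 0 ≤ sqPowerSum s a 2 := sum_nonneg fun i _ => by positivity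
  refine (expect_le_expect fun z _ => hpointwise (sq_nonneg ‖steinhausSum s a z‖)).trans ?_
  simp only [expect_add_distrib, expect_sub_distrib, ← mul_expect,
    expect_norm_steinhausSum_sq s a (show 1 < q by lia),
    expect_norm_steinhausSum_sq_pow_two s a (show 2 < q by lia),
    expect_norm_steinhausSum_sq_pow_three s a (show 3 < q by lia),
    expect_norm_steinhausSum_sq_pow_four s a hq, ha]
  linarith

theorem one_le_exp_mul_expect_norm_steinhausSum_rpow (hq : 4 < q) {p : ℝ} (hp : p ≤ 2)
    (ha : sqPowerSum s a 1 = 1) :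
    1 ≤ exp (0.55 * (1 - p / 2)) * 𝔼 z : ι → ZMod q, ‖steinhausSum s a z‖ ^ p := by
  have hpow (z : ι → ZMod q) : (‖steinhausSum s a z‖ ^ 2) ^ (p / 2) = ‖steinhausSum s a z‖ ^ p := by
    rw [← rpow_two, ← rpow_mul (norm_nonneg _), mul_div_cancel₀ p two_ne_zero]
  simpa only [hpow] using one_le_exp_mul_expect_rpow (r := p / 2)
    (fun z : ι → ZMod q => sq_nonneg ‖steinhausSum s a z‖) (by linarith)
    ((expect_norm_steinhausSum_sq s a (by lia)).trans ha)
    (expect_norm_steinhausSum_sq_mul_log_le s a hq ha)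

theorem khinchine_steinhausSum (hq : 4 < q) {p : ℝ} (hp₀ : 0 < p) (hp : p ≤ 2) :
    (∑ i ∈ s, ‖a i‖ ^ 2) ^ (p / 2) ≤
      exp (0.55 * (1 - p / 2)) * 𝔼 z : ι → ZMod q, ‖steinhausSum s a z‖ ^ p := by
  set A : ℝ := ∑ i ∈ s, ‖a i‖ ^ 2
  have hA : sqPowerSum s a 1 = A := by simp only [sqPowerSum, pow_one, A]
  have hA₀ : 0 ≤ A := by positivity
  rcases hA₀.eq_or_lt with hzero | hpos
  · rw [← hzero, zero_rpow (by positivity)]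
    have := expect_nonneg fun z (_ : z ∈ (univ : Finset (ι → ZMod q))) =>
      rpow_nonneg (norm_nonneg (steinhausSum s a z)) p
    positivity
  · have hc : ‖((√A : ℝ) : ℂ)⁻¹‖ = (√A)⁻¹ := by
      rw [norm_inv, Complex.norm_real, norm_of_nonneg (sqrt_nonneg A)]
    have hunit := one_le_exp_mul_expect_norm_steinhausSum_rpow s
      (fun i => ((√A : ℝ) : ℂ)⁻¹ * a i) hq hp (by
        rw [sqPowerSum_const_mul, hA, hc, pow_one, inv_pow, sq_sqrt hA₀, inv_mul_cancel₀ hpos.ne'])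
    have hroot : √A ^ p = A ^ (p / 2) := by
      rw [sqrt_eq_rpow, ← rpow_mul hA₀, one_div_mul_eq_div]
    simp only [steinhausSum_const_mul, norm_mul, hc, mul_rpow (inv_nonneg.2 (sqrt_nonneg A))
      (norm_nonneg _), inv_rpow (sqrt_nonneg A), hroot, ← mul_expect] at hunit
    rwa [mul_left_comm, ← div_eq_inv_mul, one_le_div (rpow_pos_of_pos hpos _)] at hunit

end Moments

section Holder

theorem sum_prod_rpow_le_prod_rpow_sum {ι κ : Type*} [Fintype ι] [Fintype κ] {w : ι → ℝ}
    {x : ι → κ → ℝ} (hw : ∀ l, 0 ≤ w l) (hw₁ : ∑ l, w l = 1) (hx : ∀ l i, 0 ≤ x l i) :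
    ∑ i, ∏ l, x l i ^ w l ≤ ∏ l, (∑ i, x l i) ^ w l := by
  have hS (l : ι) : 0 ≤ ∑ i, x l i := sum_nonneg fun i _ => hx l i
  have hfactor (l : ι) (i : κ) :
      x l i ^ w l = (∑ i, x l i) ^ w l * (x l i / ∑ i, x l i) ^ w l := by
    rw [← mul_rpow (hS l) (div_nonneg (hx l i) (hS l)), mul_div_cancel_of_imp']
    exact fun h => (sum_eq_zero_iff_of_nonneg fun i _ => hx l i).1 h i (mem_univ i)
  have hnormalized : ∑ i, ∏ l, (x l i / ∑ i, x l i) ^ w l ≤ 1 :=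
    calc ∑ i, ∏ l, (x l i / ∑ i, x l i) ^ w l
      _ ≤ ∑ i, ∑ l, w l * (x l i / ∑ i, x l i) := sum_le_sum fun i _ =>
        geom_mean_le_arith_mean_weighted univ w _ (fun l _ => hw l) hw₁
          fun l _ => div_nonneg (hx l i) (hS l)
      _ = ∑ l, w l * ((∑ i, x l i) / ∑ i, x l i) := by
        rw [sum_comm]
        simp only [mul_sum, sum_div]
      _ ≤ ∑ l, w l := sum_le_sum fun l _ => mul_le_of_le_one_right (hw l) (div_self_le_one _)
      _ = 1 := hw₁
  simp_rw [hfactor, prod_mul_distrib, ← mul_sum]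
  exact mul_le_of_le_one_right (prod_nonneg fun l _ => rpow_nonneg (hS l) _) hnormalized

theorem sum_rpow_mul_rpow_mul_prod_rpow_le {κ : Type*} [Fintype κ] {k : ℕ} {α β γ : ℝ}
    (hα : 0 ≤ α) (hβ : 0 ≤ β) (hγ : 0 ≤ γ) (hsum : α + β + k * γ = 1) {x y : κ → ℝ}
    {u : Fin k → κ → ℝ} (hx : ∀ i, 0 ≤ x i) (hy : ∀ i, 0 ≤ y i) (hu : ∀ l i, 0 ≤ u l i) :
    ∑ i, x i ^ α * (y i ^ β * ∏ l, u l i ^ γ) ≤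
      (∑ i, x i) ^ α * ((∑ i, y i) ^ β * ∏ l, (∑ i, u l i) ^ γ) := by
  have := sum_prod_rpow_le_prod_rpow_sum
    (w := fun l : Option (Option (Fin k)) => l.elim α fun l => l.elim β fun _ => γ)
    (x := fun l => l.elim x fun l => l.elim y u)
    (by rintro (_ | _ | _) <;> assumption)
    (by simp [Fintype.sum_option, ← hsum, add_assoc])
    (by rintro (_ | _ | _) <;>
      simp only [Option.elim_none, Option.elim_some, hx, hy, hu, implies_true])
  simpa only [Fintype.prod_option, Option.elim_none, Option.elim_some] using this

theorem minkowski_sum_rpow_le {ι κ : Type*} [Fintype ι] [Fintype κ] {r : ℝ} (hr : 1 ≤ r)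
    {g : ι → κ → ℝ} (hg : ∀ i j, 0 ≤ g i j) :
    ∑ i, (∑ j, g i j) ^ r ≤ (∑ j, (∑ i, g i j ^ r) ^ r⁻¹) ^ r := by
  have hr₀ : 0 < r := one_pos.trans_le hr
  have hminkowski : (∑ i, (∑ j, g i j) ^ r) ^ r⁻¹ ≤ ∑ j, (∑ i, g i j ^ r) ^ r⁻¹ := by
    have := le_sum_of_subadditive_on_pred (fun v : ι → ℝ => (∑ i, v i ^ r) ^ r⁻¹)
      (fun v => ∀ i, 0 ≤ v i) (by simp [hr₀.ne'])
      (fun u v hu hv => by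
        simpa only [one_div, Pi.add_apply] using
          Lp_add_le_of_nonneg univ hr (fun i _ => hu i) fun i _ => hv i)
      (fun u v hu hv i => add_nonneg (hu i) (hv i)) (fun j i => g i j) (s := univ)
      fun j _ i => hg i j
    simpa only [Finset.sum_apply] using this
  have hS : 0 ≤ ∑ i, (∑ j, g i j) ^ r := sum_nonneg fun i _ =>
    rpow_nonneg (sum_nonneg fun j _ => hg i j) r
  have hnorms : 0 ≤ ∑ j, (∑ i, g i j ^ r) ^ r⁻¹ := sum_nonneg fun j _ =>
    rpow_nonneg (sum_nonneg fun i _ => rpow_nonneg (hg i j) r) _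
  exact (rpow_inv_le_iff_of_pos hS hnorms hr₀).1 hminkowski

end Holder

section Blei

theorem sum_eq_sum_sum_insertNth {M β : Type*} [AddCommMonoid M] [Fintype β] {n : ℕ}
    (l : Fin (n + 1)) (F : (Fin (n + 1) → β) → M) :
    ∑ j, F j = ∑ i, ∑ j : Fin n → β, F (l.insertNth i j) := by
  rw [← (Fin.insertNthEquiv (fun _ => β) l).sum_comp, Fintype.sum_prod_type]
  rfl

theorem sum_eq_sum_sum_cons {M β : Type*} [AddCommMonoid M] [Fintype β] {n : ℕ}
    (F : (Fin (n + 1) → β) → M) : ∑ j, F j = ∑ i, ∑ j : Fin n → β, F (Fin.cons i j) := by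
  simpa only [Fin.insertNth_zero'] using sum_eq_sum_sum_insertNth 0 F

variable {ι : Type*} [Fintype ι] {k : ℕ}

/-- The `r`-th power of the mixed `(ℓ^r, ℓ^2)` norm of `f`, the inner `ℓ^2` norm being taken in
the coordinate `l`. The outer sum runs over all `k` coordinates, to avoid `Fin (k - 1)`, so it
counts every slice `card ι` times; hence the normalization. -/
noncomputable def mixedSum (r : ℝ) (l : Fin k) (f : (Fin k → ι) → ℝ) : ℝ :=
  (Fintype.card ι : ℝ)⁻¹ * ∑ j, (∑ i, f (Function.update j l i) ^ 2) ^ (r / 2)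

theorem mixedSum_nonneg (r : ℝ) (l : Fin k) (f : (Fin k → ι) → ℝ) : 0 ≤ mixedSum r l f := by
  unfold mixedSum
  positivity

theorem mixedSum_eq_sum_insertNth {r : ℝ} (hr : r ≠ 0) (l : Fin (k + 1))
    (f : (Fin (k + 1) → ι) → ℝ) :
    mixedSum r l f = ∑ j : Fin k → ι, (∑ i, f (l.insertNth i j) ^ 2) ^ (r / 2) := by
  rw [mixedSum, sum_eq_sum_sum_insertNth l]
  simp only [Fin.update_insertNth, sum_const, card_univ, nsmul_eq_mul]
  rcases isEmpty_or_nonempty ι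
  · simp [hr]
  · rw [inv_mul_cancel_left₀ (Nat.cast_ne_zero.2 Fintype.card_ne_zero)]

theorem mixedSum_succ (r : ℝ) (l : Fin k) (f : (Fin (k + 1) → ι) → ℝ) :
    mixedSum r l.succ f = ∑ i, mixedSum r l fun j => f (Fin.cons i j) := by
  simp only [mixedSum, sum_eq_sum_sum_cons, Fin.cons_update, mul_sum]

theorem sum_slice_rpow_rpow_le_mixedSum_rpow {s c : ℝ} (hs : 0 < s) (hs₂ : s ≤ 2) (hc : 0 ≤ c)
    {f : (Fin (k + 1) → ι) → ℝ} (hf : ∀ j, 0 ≤ f j) :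
    (∑ i, (∑ j : Fin k → ι, f (Fin.cons i j) ^ s) ^ (2 / s)) ^ (c / 2) ≤
      mixedSum s 0 f ^ (c / s) := by
  have hsq {x : ℝ} (hx : 0 ≤ x) : (x ^ s) ^ (2 / s) = x ^ 2 := by
    rw [← rpow_mul hx, mul_div_cancel₀ _ hs.ne', rpow_two]
  have hminkowski : ∑ i, (∑ j : Fin k → ι, f (Fin.cons i j) ^ s) ^ (2 / s) ≤
      mixedSum s 0 f ^ (2 / s) := by
    simpa only [hsq (hf _), inv_div, mixedSum_eq_sum_insertNth hs.ne', Fin.insertNth_zero'] using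
      minkowski_sum_rpow_le ((one_le_div hs).2 hs₂)
        fun (i : ι) (j : Fin k → ι) => rpow_nonneg (hf (Fin.cons i j)) s
  have hexp : c / s = 2 / s * (c / 2) := by ring
  rw [hexp, rpow_mul (mixedSum_nonneg s 0 f)]
  exact rpow_le_rpow (sum_nonneg fun i _ => rpow_nonneg
    (sum_nonneg fun j _ => rpow_nonneg (hf _) s) _) hminkowski (by positivity)

/-- Blei's inequality is the case `k * θ = 1`. The first factor, carrying the weight that is left
over when `k * θ < 1`, is what makes induction on `k` possible. -/
theorem blei_inequality {s p θ : ℝ} (hs : 0 < s) (hs₂ : s ≤ 2) (hp : 0 ≤ p) (hθ : 0 ≤ θ)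
    (hpθ : p * (θ / 2 + (1 - θ) / s) = 1) (hk : k * θ ≤ 1) {f : (Fin k → ι) → ℝ}
    (hf : ∀ j, 0 ≤ f j) :
    ∑ j, f j ^ p ≤
      (∑ j, f j ^ s) ^ ((1 - k * θ) * p / s) * ∏ l, mixedSum s l f ^ (θ * p / s) := by
  induction k with
  | zero =>
    simp only [univ_unique, sum_singleton, Nat.cast_zero, zero_mul, sub_zero, one_mul,
      univ_eq_empty, prod_empty, mul_one, ← rpow_mul (hf _), mul_div_cancel₀ p hs.ne', le_refl]
  | succ k ih =>
    push_cast at hk ⊢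
    set F : ι → ℝ := fun i => ∑ j : Fin k → ι, f (Fin.cons i j) ^ s with hF
    set α := (1 - (k + 1) * θ) * p / s with hα
    have hα₀ : 0 ≤ α := div_nonneg (mul_nonneg (by linarith) hp) hs.le
    have hF₀ (i : ι) : 0 ≤ F i := sum_nonneg fun j _ => rpow_nonneg (hf _) s
    have hslice (i : ι) : ∑ j : Fin k → ι, f (Fin.cons i j) ^ p ≤
        F i ^ α * ((F i ^ (2 / s)) ^ (θ * p / 2) *
          ∏ l, mixedSum s l (fun j => f (Fin.cons i j)) ^ (θ * p / s)) := by
      refine (ih (by linarith) fun j => hf (Fin.cons i j)).trans_eq ?_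
      rw [← mul_assoc, ← rpow_mul (hF₀ i), ← rpow_add_of_nonneg (hF₀ i) hα₀ (by positivity)]
      congr 2
      rw [hα]
      field_simp
      ring
    have hweights : α + θ * p / 2 + k * (θ * p / s) = 1 := by
      rw [← hpθ, hα]
      ring
    calc ∑ j, f j ^ p = ∑ i, ∑ j : Fin k → ι, f (Fin.cons i j) ^ p :=
        sum_eq_sum_sum_cons _
      _ ≤ _ := sum_le_sum fun i _ => hslice i
      _ ≤ (∑ i, F i) ^ α * ((∑ i, F i ^ (2 / s)) ^ (θ * p / 2) *
          ∏ l : Fin k, (∑ i, mixedSum s l fun j => f (Fin.cons i j)) ^ (θ * p / s)) :=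
        sum_rpow_mul_rpow_mul_prod_rpow_le hα₀ (by positivity) (by positivity) hweights hF₀
          (fun i => rpow_nonneg (hF₀ i) _) fun l i => mixedSum_nonneg s l _
      _ ≤ (∑ j, f j ^ s) ^ α * ∏ l, mixedSum s l f ^ (θ * p / s) := by
        simp only [sum_eq_sum_sum_cons fun j => f j ^ s, Fin.prod_univ_succ, mixedSum_succ, ← hF]
        gcongr
        · exact rpow_nonneg (sum_nonneg fun i _ => hF₀ i) α
        · exact prod_nonneg fun l _ => rpow_nonneg (sum_nonneg fun i _ => mixedSum_nonneg s l _) _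
        · exact sum_slice_rpow_rpow_le_mixedSum_rpow hs hs₂ (mul_nonneg hθ hp) hf

theorem sum_rpow_le_rpow_of_mixedSum_le {s p D : ℝ} (hs : 0 < s) (hs₂ : s ≤ 2) (hp : 0 ≤ p)
    (hk : k ≠ 0) (hps : p * ((k : ℝ)⁻¹ / 2 + (1 - (k : ℝ)⁻¹) / s) = 1) (hD : 0 ≤ D)
    {f : (Fin k → ι) → ℝ} (hf : ∀ j, 0 ≤ f j) (hmixed : ∀ l, mixedSum s l f ≤ D ^ s) :
    ∑ j, f j ^ p ≤ D ^ p := by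
  have hk₁ : (k : ℝ) * (k : ℝ)⁻¹ = 1 := mul_inv_cancel₀ (Nat.cast_ne_zero.2 hk)
  calc ∑ j, f j ^ p
    _ ≤ ∏ l, mixedSum s l f ^ ((k : ℝ)⁻¹ * p / s) := by
      simpa only [hk₁, sub_self, zero_mul, zero_div, rpow_zero, one_mul] using
        blei_inequality hs hs₂ hp (by positivity) hps hk₁.le hf
    _ ≤ ∏ _l : Fin k, (D ^ s) ^ ((k : ℝ)⁻¹ * p / s) :=
      prod_le_prod (fun l _ => rpow_nonneg (mixedSum_nonneg s l f) _) fun l _ =>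
        rpow_le_rpow (mixedSum_nonneg s l f) (hmixed l) (by positivity)
    _ = D ^ p := by
      rw [prod_const, card_univ, Fintype.card_fin, ← rpow_mul hD, mul_div_cancel₀ _ hs.ne',
        ← rpow_mul_natCast hD, mul_right_comm, inv_mul_cancel₀ (Nat.cast_ne_zero.2 hk), one_mul]

end Blei

section BohnenblustHille

variable {ι : Type*} [Fintype ι] {n : ℕ}

theorem norm_curryMid_apply_le (U : ContinuousMultilinearMap ℂ (fun _ : Fin (n + 1) => ι → ℂ) ℂ)
    (l : Fin (n + 1)) {x : ι → ℂ} (hx : ∀ i, ‖x i‖ ≤ 1) : ‖U.curryMid l x‖ ≤ ‖U‖ := by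
  have hx₁ : ‖x‖ ≤ 1 := (pi_norm_le_iff_of_nonneg zero_le_one).2 hx
  simpa only [ContinuousMultilinearMap.norm_curryMid, mul_one] using
    (U.curryMid l).le_of_opNorm_le_of_le le_rfl hx₁

variable [DecidableEq ι]

/-- The coefficient of the multilinear form `U` at the multi-index `j`, that is, its value at the
corresponding canonical basis vectors. -/
noncomputable def basisCoeff (U : ContinuousMultilinearMap ℂ (fun _ : Fin n => ι → ℂ) ℂ)
    (j : Fin n → ι) : ℂ :=
  U fun k => Pi.single (j k) 1

theorem norm_basisCoeff_le (U : ContinuousMultilinearMap ℂ (fun _ : Fin n => ι → ℂ) ℂ)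
    (j : Fin n → ι) : ‖basisCoeff U j‖ ≤ ‖U‖ := by
  refine (U.le_opNorm _).trans (mul_le_of_le_one_right (norm_nonneg U) ?_)
  simp [Pi.norm_single]

theorem basisCoeff_curryMid (U : ContinuousMultilinearMap ℂ (fun _ : Fin (n + 1) => ι → ℂ) ℂ)
    (l : Fin (n + 1)) (x : ι → ℂ) (j : Fin n → ι) :
    basisCoeff (U.curryMid l x) j = ∑ i, x i * basisCoeff U (l.insertNth i j) := by
  have hbasis (i : ι) : (fun k => Pi.single ((l.insertNth i j : Fin (n + 1) → ι) k) (1 : ℂ)) =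
      l.insertNth (α := fun _ => ι → ℂ) (Pi.single i 1) fun k => Pi.single (j k) 1 := by
    rw [Fin.eq_insertNth_iff]
    simp [Fin.removeNth, funext_iff]
  conv_lhs => rw [pi_eq_sum_univ' x, map_sum]
  simp [basisCoeff, hbasis]

theorem sum_norm_basisCoeff_le (U : ContinuousMultilinearMap ℂ (fun _ : Fin 1 => ι → ℂ) ℂ) :
    ∑ j, ‖basisCoeff U j‖ ≤ ‖U‖ := by
  set c : ι → ℂ := fun i => basisCoeff U (Fin.insertNth 0 i default) with hc
  have hphase (i : ι) : conj (c i) / ‖c i‖ * c i = (‖c i‖ : ℂ) := by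
    rw [div_mul_eq_mul_div, Complex.conj_mul', sq, mul_self_div_self]
  calc ∑ j, ‖basisCoeff U j‖ = ∑ i, ‖c i‖ := by
        rw [sum_eq_sum_sum_insertNth 0]
        simp only [univ_unique, sum_singleton, hc]
    _ = ‖∑ i, conj (c i) / ‖c i‖ * c i‖ := by
      simp_rw [hphase, ← Complex.ofReal_sum]
      rw [Complex.norm_real, norm_of_nonneg (by positivity)]
    _ = ‖basisCoeff (U.curryMid 0 fun i => conj (c i) / ‖c i‖) default‖ := by
      rw [basisCoeff_curryMid]
    _ ≤ ‖U‖ := (norm_basisCoeff_le _ _).trans <| norm_curryMid_apply_le U 0 fun i => by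
      simpa using div_self_le_one ‖c i‖

theorem mixedSum_norm_basisCoeff_le {s C : ℝ} (hs : 0 < s) (hs₂ : s ≤ 2)
    (U : ContinuousMultilinearMap ℂ (fun _ : Fin (n + 1) => ι → ℂ) ℂ) (l : Fin (n + 1))
    (hC : ∀ V : ContinuousMultilinearMap ℂ (fun _ : Fin n => ι → ℂ) ℂ, ‖V‖ ≤ ‖U‖ →
      ∑ j, ‖basisCoeff V j‖ ^ s ≤ C) :
    mixedSum s l (fun j => ‖basisCoeff U j‖) ≤ exp (0.55 * (1 - s / 2)) * C := by
  have hslice (j : Fin n → ι) (z : ι → ZMod 5) :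
      steinhausSum univ (fun i => basisCoeff U (l.insertNth i j)) z =
        basisCoeff (U.curryMid l fun i => ZMod.stdAddChar (z i)) j := by
    simp only [steinhausSum, basisCoeff_curryMid, mul_comm]
  calc mixedSum s l (fun j => ‖basisCoeff U j‖)
    _ = ∑ j : Fin n → ι, (∑ i, ‖basisCoeff U (l.insertNth i j)‖ ^ 2) ^ (s / 2) :=
      mixedSum_eq_sum_insertNth hs.ne' l _
    _ ≤ ∑ j : Fin n → ι, exp (0.55 * (1 - s / 2)) * 𝔼 z : ι → ZMod 5,
          ‖basisCoeff (U.curryMid l fun i => ZMod.stdAddChar (z i)) j‖ ^ s := by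
      simp_rw [← hslice]
      exact sum_le_sum fun j _ => khinchine_steinhausSum univ _ (by norm_num) hs hs₂
    _ = exp (0.55 * (1 - s / 2)) * 𝔼 z : ι → ZMod 5, ∑ j : Fin n → ι,
          ‖basisCoeff (U.curryMid l fun i => ZMod.stdAddChar (z i)) j‖ ^ s := by
      rw [← mul_sum, expect_sum_comm]
    _ ≤ exp (0.55 * (1 - s / 2)) * C := by
      gcongr
      exact expect_le univ_nonempty fun z _ => hC _ <|
        norm_curryMid_apply_le U l fun i => (AddChar.norm_apply _ _).le

/-- The Bohnenblust–Hille exponent of `n`-linear forms. -/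
noncomputable def bhExponent (n : ℕ) : ℝ := 2 * n / (n + 1)

theorem bhExponent_succ_pos (n : ℕ) : 0 < bhExponent (n + 1) := by
  unfold bhExponent
  positivity

theorem bhExponent_le_two (n : ℕ) : bhExponent n ≤ 2 := by
  rw [bhExponent, div_le_iff₀ (by positivity)]
  linarith

theorem bhExponent_interpolation (n : ℕ) :
    bhExponent (n + 2) * (((n + 2 : ℕ) : ℝ)⁻¹ / 2 +
      (1 - ((n + 2 : ℕ) : ℝ)⁻¹) / bhExponent (n + 1)) = 1 := by
  simp only [bhExponent]
  push_cast
  field_simp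
  ring

theorem one_sub_bhExponent_div_two (n : ℕ) :
    1 - bhExponent (n + 1) / 2 = ((n + 1 : ℕ) : ℝ)⁻¹ * bhExponent (n + 1) / 2 := by
  simp only [bhExponent]
  push_cast
  field_simp
  ring

theorem sum_norm_basisCoeff_rpow_le
    (U : ContinuousMultilinearMap ℂ (fun _ : Fin (n + 1) => ι → ℂ) ℂ) :
    ∑ j, ‖basisCoeff U j‖ ^ bhExponent (n + 1) ≤
      (exp (0.275 * harmonic n) * ‖U‖) ^ bhExponent (n + 1) := by
  induction n with
  | zero => simpa [bhExponent, one_add_one_eq_two] using sum_norm_basisCoeff_le U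
  | succ n ih =>
    set s := bhExponent (n + 1) with hs
    have hs₀ : 0 < s := bhExponent_succ_pos n
    have hs₂ : s ≤ 2 := bhExponent_le_two (n + 1)
    have hconst : exp (0.55 * (1 - s / 2)) * (exp (0.275 * harmonic n) * ‖U‖) ^ s =
        (exp (0.275 * harmonic (n + 1)) * ‖U‖) ^ s := by
      rw [mul_rpow (by positivity) (by positivity), mul_rpow (by positivity) (by positivity),
        ← exp_mul, ← exp_mul, ← mul_assoc, ← exp_add, one_sub_bhExponent_div_two, ← hs,
        harmonic_succ]
      push_cast
      ring_nf
    refine sum_rpow_le_rpow_of_mixedSum_le hs₀ hs₂ (bhExponent_succ_pos _).le (by lia)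
      (bhExponent_interpolation n) (by positivity) (fun j => norm_nonneg _) fun l => ?_
    rw [← hconst]
    refine mixedSum_norm_basisCoeff_le hs₀ hs₂ U l fun V hV => (ih V).trans ?_
    gcongr

theorem rpow_sum_norm_basisCoeff_le
    (U : ContinuousMultilinearMap ℂ (fun _ : Fin (n + 1) => ι → ℂ) ℂ) :
    (∑ j, ‖basisCoeff U j‖ ^ bhExponent (n + 1)) ^ (bhExponent (n + 1))⁻¹ ≤
      exp (0.275 * harmonic n) * ‖U‖ := by
  rw [rpow_inv_le_iff_of_pos (by positivity) (by positivity) (bhExponent_succ_pos n)]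
  exact sum_norm_basisCoeff_rpow_le U

end BohnenblustHille

section Harmonic

theorem harmonic_le_log_add_two_thirds {n : ℕ} (hn : 6 ≤ n) : harmonic n ≤ log n + 2 / 3 := by
  have hseq := (strictAnti_eulerMascheroniSeq'.antitone hn).trans
    eulerMascheroniSeq'_six_lt_two_thirds.le
  rw [eulerMascheroniSeq', if_neg (by lia)] at hseq
  linarith

theorem exp_harmonic_le_mul_rpow {n : ℕ} (hn : 2 ^ 10 ≤ n) :
    exp (0.275 * harmonic n) ≤ 0.99135458644 * (n : ℝ) ^ (0.304975 : ℝ) := by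
  have hn₀ : (0 : ℝ) < n := by exact_mod_cast (show 0 < 2 ^ 10 by norm_num).trans_le hn
  have hlog : 10 * log 2 ≤ log n := by
    simpa using log_le_log (by positivity) (show (2 : ℝ) ^ 10 ≤ n by exact_mod_cast hn)
  have hconst := one_sub_inv_le_log_of_pos (show (0 : ℝ) < 0.99135458644 by norm_num)
  calc exp (0.275 * harmonic n)
    _ ≤ exp (log 0.99135458644 + log n * 0.304975) := by
      gcongr
      linarith [harmonic_le_log_add_two_thirds (show 6 ≤ n by lia), log_two_gt_d9]
    _ = 0.99135458644 * (n : ℝ) ^ (0.304975 : ℝ) := by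
      rw [exp_add, exp_log (by norm_num), rpow_def_of_pos hn₀]

end Harmonic

theorem stmt16_general {ι : Type*} [Fintype ι] [DecidableEq ι] (n : ℕ) (hn : 2 ^ 10 < n)
    (U : ContinuousMultilinearMap ℂ (fun _ : Fin n => ι → ℂ) ℂ) :
    (∑ i : Fin n → ι, ‖U (fun k => Pi.single (i k) (1 : ℂ))‖ ^ ((2 * n : ℝ) / (n + 1))) ^
        ((n + 1 : ℝ) / (2 * n)) ≤
      0.99135458644 * ((n : ℝ) - 1) ^ (0.304975 : ℝ) * ‖U‖ := by
  obtain ⟨m, rfl⟩ : ∃ m, n = m + 1 := Nat.exists_eq_add_one.2 (by lia)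
  calc _ = (∑ j, ‖basisCoeff U j‖ ^ bhExponent (m + 1)) ^ (bhExponent (m + 1))⁻¹ := by
        simp only [bhExponent, inv_div, basisCoeff]
    _ ≤ exp (0.275 * harmonic m) * ‖U‖ := rpow_sum_norm_basisCoeff_le U
    _ ≤ 0.99135458644 * (((m + 1 : ℕ) : ℝ) - 1) ^ (0.304975 : ℝ) * ‖U‖ := by
      rw [Nat.cast_add_one, add_sub_cancel_right]
      gcongr
      exact exp_harmonic_le_mul_rpow (by lia)

theorem stmt16 (n : ℕ) (hn : 2 ^ 50 < n) (N : ℕ) (hN : 0 < N)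
    (U : ContinuousMultilinearMap ℂ (fun _ : Fin n => (Fin N → ℂ)) ℂ) :
    BHcomplex n N U ≤ 0.99135458644 * ((n : ℝ) - 1) ^ (0.304975 : ℝ) * ‖U‖ :=
  stmt16_general n (lt_trans (by norm_num) hn) U
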